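/- Let n = 2k+1 with k ≥ 0 and let X be an n×n complex cross matrix. Then the characteristic polynomial of X factors as det(λI − X) = (λ − X k k) · ∏_{i=0}^{k-1} ( (λ − X i i)(λ − X (n-1-i) (n-1-i)) − X i (n-1-i) · X (n-1-i) i ), as an identity of polynomials in λ. -/

import Mathlib

open Polynomial

/-- An `n × n` complex matrix is a *cross matrix* if its nonzero entries lie
only on the main diagonal and the anti-diagonal (0-based indices). -/
def IsCrossMatrix {n : ℕ} (X : Matrix (Fin n) (Fin n) ℂ) : Prop :=
  ∀ i j : Fin n, j ≠ i → (i : ℕ) + (j : ℕ) + 1 ≠ n → X i j = 0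

/-!
Listing the indices by orbits of `i ↦ i.rev`, the fixed centre first, turns a matrix supported on
the two diagonals into a block diagonal one, with one `1 × 1` block and `k` blocks of size `2 × 2`.
Subtracting from `λ I` preserves the support, so this computes the characteristic polynomial.
-/

section BlockDeterminant

variable {R ι m : Type*} [CommRing R] [Fintype ι] [DecidableEq ι] [Fintype m] [DecidableEq m]

theorem det_eq_prod_det_blockDiag {A : Matrix (m × ι) (m × ι) R}
    (hA : ∀ b c i j, i ≠ j → A (b, i) (c, j) = 0) :
    A.det = ∏ i, (A.blockDiag i).det := by
  have hblock : A = Matrix.blockDiagonal A.blockDiag := by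
    ext ⟨b, i⟩ ⟨c, j⟩
    rw [Matrix.blockDiagonal_apply]
    split_ifs with hij
    · obtain rfl : i = j := hij
      rfl
    · exact hA b c i j hij
  conv_lhs => rw [hblock, Matrix.det_blockDiagonal]

theorem det_eq_det_toBlocks₁₁_mul_prod {A : Matrix (m ⊕ Fin 2 × ι) (m ⊕ Fin 2 × ι) R}
    (h₂₁ : A.toBlocks₂₁ = 0)
    (h₂₂ : ∀ b c i j, i ≠ j → A (Sum.inr (b, i)) (Sum.inr (c, j)) = 0) :
    A.det = A.toBlocks₁₁.det *
      ∏ i, (A (Sum.inr (0, i)) (Sum.inr (0, i)) * A (Sum.inr (1, i)) (Sum.inr (1, i)) -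
        A (Sum.inr (0, i)) (Sum.inr (1, i)) * A (Sum.inr (1, i)) (Sum.inr (0, i))) := by
  have hpairs : A.toBlocks₂₂.det = ∏ i, (A.toBlocks₂₂.blockDiag i).det :=
    det_eq_prod_det_blockDiag h₂₂
  conv_lhs => rw [← A.fromBlocks_toBlocks, h₂₁, Matrix.det_fromBlocks_zero₂₁, hpairs]
  simp only [Matrix.det_fin_two, Matrix.blockDiag_apply, Matrix.toBlocks₂₂, Matrix.of_apply]

end BlockDeterminant

/-- The index fixed by `Fin.rev`, where the two diagonals of an odd-order matrix meet. -/
def crossCentre (k : ℕ) : Fin (2 * k + 1) :=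
  Fin.castLE (by omega) (Fin.last k)

/-- The index `i < k` seen in `Fin (2 * k + 1)`, as the representative of the orbit
`{i, 2 * k - i}` of `Fin.rev` that lies before the centre. -/
def crossLower {k : ℕ} (i : Fin k) : Fin (2 * k + 1) :=
  ⟨i, by omega⟩

/-- The enumeration of `Fin (2 * k + 1)` by orbits of `Fin.rev`: the centre comes from the left
summand, and `(0, i)`, `(1, i)` on the right give the two members `i`, `2 * k - i` of an orbit. -/
def crossIndex (k : ℕ) : Unit ⊕ Fin 2 × Fin k → Fin (2 * k + 1)
  | Sum.inl _ => crossCentre k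
  | Sum.inr (0, i) => crossLower i
  | Sum.inr (1, i) => (crossLower i).rev

theorem crossIndex_surjective (k : ℕ) : Function.Surjective (crossIndex k) := by
  intro j
  rcases lt_trichotomy (j : ℕ) k with hlt | heq | hgt
  · exact ⟨Sum.inr (0, ⟨j, hlt⟩), rfl⟩
  · exact ⟨Sum.inl (), Fin.ext heq.symm⟩
  · have hrev : (j.rev : ℕ) < k := by
      rw [Fin.val_rev]
      omega
    exact ⟨Sum.inr (1, ⟨j.rev, hrev⟩), Fin.rev_rev j⟩

theorem crossIndex_bijective (k : ℕ) : Function.Bijective (crossIndex k) :=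
  (Fintype.bijective_iff_surjective_and_card _).2 ⟨crossIndex_surjective k, by simp [add_comm]⟩

theorem crossLower_ne_rev {k : ℕ} (i : Fin k) : crossLower i ≠ (crossLower i).rev := by
  simp only [ne_eq, Fin.ext_iff, Fin.val_rev, crossLower]
  omega

theorem rev_crossIndex_inr {k : ℕ} (b : Fin 2) (i : Fin k) :
    (crossIndex k (Sum.inr (b, i))).rev = crossIndex k (Sum.inr (b.rev, i)) := by
  fin_cases b
  · rfl
  · exact Fin.rev_rev _

/-- Cross matrices over arbitrary coefficients: every entry off the main diagonal and the
anti-diagonal vanishes, the anti-diagonal position in row `i` being column `i.rev`. -/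
def IsCrossSupported {R : Type*} [Zero R] {n : ℕ} (M : Matrix (Fin n) (Fin n) R) : Prop :=
  ∀ i j : Fin n, j ≠ i → j ≠ i.rev → M i j = 0

theorem IsCrossMatrix.isCrossSupported {n : ℕ} {X : Matrix (Fin n) (Fin n) ℂ}
    (hX : IsCrossMatrix X) : IsCrossSupported X := by
  intro i j hne hrev
  refine hX i j hne fun hsum => hrev ?_
  rw [Fin.ext_iff, Fin.val_rev]
  omega

namespace IsCrossSupported

theorem apply_crossIndex_inr_eq_zero {R : Type*} [Zero R] {k : ℕ}
    {M : Matrix (Fin (2 * k + 1)) (Fin (2 * k + 1)) R} (hM : IsCrossSupported M)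
    {b : Fin 2} {i : Fin k} {y : Unit ⊕ Fin 2 × Fin k} (hy : ∀ c, y ≠ Sum.inr (c, i)) :
    M (crossIndex k (Sum.inr (b, i))) (crossIndex k y) = 0 := by
  refine hM _ _ ((crossIndex_bijective k).injective.ne (hy b)) ?_
  rw [rev_crossIndex_inr]
  exact (crossIndex_bijective k).injective.ne (hy b.rev)

variable {R : Type*} [CommRing R]

theorem charmatrix {n : ℕ} {M : Matrix (Fin n) (Fin n) R} (hM : IsCrossSupported M) :
    IsCrossSupported M.charmatrix := by
  intro i j hne hrev
  rw [Matrix.charmatrix_apply_ne _ _ _ hne.symm, hM i j hne hrev, C_0, neg_zero]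

theorem det_odd {k : ℕ} {M : Matrix (Fin (2 * k + 1)) (Fin (2 * k + 1)) R}
    (hM : IsCrossSupported M) :
    M.det = M (crossCentre k) (crossCentre k) *
      ∏ i : Fin k,
        (M (crossLower i) (crossLower i) * M (crossLower i).rev (crossLower i).rev -
          M (crossLower i) (crossLower i).rev * M (crossLower i).rev (crossLower i)) := by
  have h₂₁ : (M.submatrix (crossIndex k) (crossIndex k)).toBlocks₂₁ = 0 := by
    ext ⟨b, i⟩ u
    exact hM.apply_crossIndex_inr_eq_zero fun c => Sum.inl_ne_inr
  have h₂₂ (b c : Fin 2) (i j : Fin k) (hij : i ≠ j) :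
      M.submatrix (crossIndex k) (crossIndex k) (Sum.inr (b, i)) (Sum.inr (c, j)) = 0 :=
    hM.apply_crossIndex_inr_eq_zero fun d h => hij (congrArg Prod.snd (Sum.inr_injective h)).symm
  rw [← Matrix.det_submatrix_equiv_self (Equiv.ofBijective _ (crossIndex_bijective k)),
    Equiv.coe_ofBijective, det_eq_det_toBlocks₁₁_mul_prod h₂₁ h₂₂, Matrix.det_unique]
  rfl

end IsCrossSupported

theorem crossMatrix_charpoly_odd_general {R : Type*} [CommRing R] (k : ℕ)
    (X : Matrix (Fin (2 * k + 1)) (Fin (2 * k + 1)) R) (hX : IsCrossSupported X) :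
    X.charpoly =
      (Polynomial.X - C (X (crossCentre k) (crossCentre k))) *
        ∏ i : Fin k,
          ((Polynomial.X - C (X (crossLower i) (crossLower i))) *
              (Polynomial.X - C (X (crossLower i).rev (crossLower i).rev)) -
            C (X (crossLower i) (crossLower i).rev) * C (X (crossLower i).rev (crossLower i))) := by
  rw [Matrix.charpoly, hX.charmatrix.det_odd]
  simp only [Matrix.charmatrix_apply_eq]
  congr 1
  refine Finset.prod_congr rfl fun i _ => ?_
  rw [Matrix.charmatrix_apply_ne _ _ _ (crossLower_ne_rev i),
    Matrix.charmatrix_apply_ne _ _ _ (crossLower_ne_rev i).symm, neg_mul_neg]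

/-- The characteristic polynomial `det (λ I - X)` of an odd-order cross matrix
(`n = 2k + 1`) factors into the linear factor `λ - X k k` times `k` quadratics.
Here for `i < k` the index `n - 1 - i` is `(Fin.castLE _ i).rev`. -/
theorem crossMatrix_charpoly_odd (k : ℕ)
    (X : Matrix (Fin (2 * k + 1)) (Fin (2 * k + 1)) ℂ) (hX : IsCrossMatrix X) :
    X.charpoly =
      (Polynomial.X - C (X ⟨k, by omega⟩ ⟨k, by omega⟩)) *
        ∏ i : Fin k,
          ((Polynomial.X - C (X (Fin.castLE (by omega) i) (Fin.castLE (by omega) i))) *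
              (Polynomial.X -
                C (X (Fin.castLE (by omega) i).rev (Fin.castLE (by omega) i).rev)) -
            C (X (Fin.castLE (by omega) i) (Fin.castLE (by omega) i).rev) *
              C (X (Fin.castLE (by omega) i).rev (Fin.castLE (by omega) i))) :=
  crossMatrix_charpoly_odd_general k X hX.isCrossSupported
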